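/- (Theorem 4.1(iii), third case.) Uniformly over all λ ∈ C⁺ and all X ∈ a with x2 ≥ x3 ≥ x1 such that α_λ ≥ β_λ and α_λ α_{X⁺} ≤ β_λ β_{X⁺}, one has E_k(X,λ) ≍ e^{⟨λ,X⁺⟩} / [ (1+α_λ α_{X⁺})^{k+1} (1+β_λ β_{X⁺})^{k} (1+γ_λ γ_{X⁺})^{k+1} ]. -/

import Mathlib

open Real MeasureTheory

/-- The rank-one Dunkl kernel `E_k^{rk1}(x,v)`. -/
noncomputable def Erk1 (k x v : ℝ) : ℝ :=
  (Real.Gamma (k + 1/2) / (Real.sqrt Real.pi * Real.Gamma k)) *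
    ∫ z in (-1 : ℝ)..1, Real.exp (z * x * v) * (1 - z) ^ (k - 1) * (1 + z) ^ k

/-- The normalized modified Bessel function `𝒥_a(y)`, for `a > -1/2`. -/
noncomputable def besselJ (a y : ℝ) : ℝ :=
  (Real.Gamma (a + 1) / (Real.sqrt Real.pi * Real.Gamma (a + 1/2))) *
    ∫ z in (-1 : ℝ)..1, Real.exp (y * z) * (1 - z ^ 2) ^ (a - 1/2)

/-- `W_k(λ,ν)`. -/
noncomputable def Wk (k l1 l2 l3 n1 n2 : ℝ) : ℝ :=
  ((l1 - n1) * (l1 - n2) * (n1 - l2) * (l2 - n2) * (n1 - l3) * (n2 - l3)) ^ (k - 1)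

/-- `V(λ) = (λ1-λ2)(λ1-λ3)(λ2-λ3)`. -/
def Vlam (l1 l2 l3 : ℝ) : ℝ := (l1 - l2) * (l1 - l3) * (l2 - l3)

/-- The `A₂` Dunkl kernel `E_k(X,λ)`, defined via the rank-one kernel formula. -/
noncomputable def EkA2 (k x1 x2 x3 l1 l2 l3 : ℝ) : ℝ :=
  (3 * Real.Gamma (3 * k) / (Vlam l1 l2 l3 ^ (2 * k) * Real.Gamma k ^ 2)) *
    ∫ n2 in l3..l2, ∫ n1 in l2..l1,
      ((n1 - l2) * (l1 - n2) * Erk1 k ((x1 - x2) / 2) (n1 - n2)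
        + (l1 - n1) * (l2 - n2) * Erk1 k (-(x1 - x2) / 2) (n1 - n2))
      * ((n1 - l3) * (n2 - l3)) * Real.exp ((x1 + x2 - 2 * x3) * (n1 + n2) / 2)
      * Wk k l1 l2 l3 n1 n2

/-!
The substitution `ν₁ = λ₁ - α_λ s`, `ν₂ = λ₃ + β_λ t` turns `E_k(X,λ)` into a constant times
`e^{⟨λ,X⁺⟩}` times an integral over the unit square of `e^{-As-Bt}`, where `A = α_λ α_{X⁺}` and
`B = β_λ β_{X⁺}`, against Beta weights and two rank-one kernels. Stripped of their exponential
growth, the latter are Laplace transforms of Beta weights, hence of size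
`(1 + N)^{-(k+1)}` and `(1 + N)^{-k}` near the corner `s = t = 0`, where `N = γ_λ γ_{X⁺}`; the mass
sits at `s ≲ 1/(1+A)` and `t ≲ 1/(1+B)`. With `σ = β_λ / γ_λ ≤ 1/2` the integral is therefore of
size `(1+A)^{-(k+1)} (1+B)^{-(k+1)} (1+N)^{-(k+1)} (1 + A + σ(1+N))`. Since `A ≤ B` and
`σN = B + β_λ α_{X⁺}` lies between `B` and `2B`, the last factor is comparable to `1 + B`.
-/

open Set

section BetaLaplace

/-- The integrand `e^{-As} s^{c-1} (1-s)^{d-1}` of `betaLaplace`. -/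
noncomputable def betaLaplaceIntegrand (c d A s : ℝ) : ℝ :=
  exp (-(A * s)) * s ^ (c - 1) * (1 - s) ^ (d - 1)

/-- The Laplace transform at `A` of the Beta weight with exponents `c`, `d`; this is Euler's
integral for Kummer's function, `B(c,d) ₁F₁(c; c+d; -A)`. -/
noncomputable def betaLaplace (c d A : ℝ) : ℝ :=
  ∫ s in (0 : ℝ)..1, betaLaplaceIntegrand c d A s

variable {c d A s : ℝ}

lemma betaLaplaceIntegrand_nonneg (hs : s ∈ Icc (0 : ℝ) 1) : 0 ≤ betaLaplaceIntegrand c d A s :=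
  mul_nonneg (mul_nonneg (exp_nonneg _) (rpow_nonneg hs.1 _))
    (rpow_nonneg (sub_nonneg.2 hs.2) _)

lemma betaLaplace_nonneg : 0 ≤ betaLaplace c d A :=
  intervalIntegral.integral_nonneg zero_le_one fun _ ↦ betaLaplaceIntegrand_nonneg

lemma mul_betaLaplaceIntegrand (hs : 0 < s) :
    s * betaLaplaceIntegrand c d A s = betaLaplaceIntegrand (c + 1) d A s := by
  rw [betaLaplaceIntegrand, betaLaplaceIntegrand, add_sub_right_comm, rpow_add_one hs.ne']
  ring

lemma rpow_mul_betaLaplaceIntegrand (e : ℝ) (hs : s < 1) :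
    (1 - s) ^ e * betaLaplaceIntegrand c d A s = betaLaplaceIntegrand c (d + e) A s := by
  rw [betaLaplaceIntegrand, betaLaplaceIntegrand, add_sub_right_comm, rpow_add (sub_pos.2 hs)]
  ring

lemma measurable_betaLaplaceIntegrand :
    Measurable fun p : ℝ × ℝ ↦ betaLaplaceIntegrand c d p.1 p.2 := by
  unfold betaLaplaceIntegrand
  fun_prop

lemma measurable_betaLaplace : Measurable (betaLaplace c d) := by
  unfold betaLaplace
  simp only [intervalIntegral.integral_of_le zero_le_one]
  exact measurable_betaLaplaceIntegrand.stronglyMeasurable.integral_prod_right.measurable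

lemma betaLaplaceIntegrand_le_of_le {A' : ℝ} (hA : A' ≤ A) (hs : s ∈ Icc (0 : ℝ) 1) :
    betaLaplaceIntegrand c d A s ≤ betaLaplaceIntegrand c d A' s := by
  have hs₁ : 0 ≤ 1 - s := sub_nonneg.2 hs.2
  have hs₀ := hs.1
  unfold betaLaplaceIntegrand
  gcongr

lemma intervalIntegrable_betaLaplaceIntegrand (hc : 0 < c) (hd : 0 < d) (hA : 0 ≤ A) :
    IntervalIntegrable (betaLaplaceIntegrand c d A) volume 0 1 := by
  have hbeta := Complex.betaIntegral_convergent (u := c) (v := d) (by simpa) (by simpa)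
  rw [intervalIntegrable_iff_integrableOn_Ioo_of_le zero_le_one] at hbeta ⊢
  refine hbeta.norm.mono' ?_ <| (ae_restrict_iff' measurableSet_Ioo).2 (ae_of_all _ fun s hs ↦ ?_)
  · exact (measurable_betaLaplaceIntegrand.comp measurable_prodMk_left).aestronglyMeasurable
  have hs' := Ioo_subset_Icc_self hs
  rw [norm_of_nonneg (betaLaplaceIntegrand_nonneg hs')]
  refine (betaLaplaceIntegrand_le_of_le hA hs').trans_eq ?_
  have hcast : 1 - (s : ℂ) = (1 - s : ℝ) := by push_cast; rfl
  rw [norm_mul, hcast, Complex.norm_cpow_eq_rpow_re_of_pos hs.1,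
    Complex.norm_cpow_eq_rpow_re_of_pos (sub_pos.2 hs.2)]
  simp [betaLaplaceIntegrand]

/-- Kummer's transformation. -/
lemma betaLaplace_swap : betaLaplace d c A = exp (-A) * betaLaplace c d (-A) := by
  rw [betaLaplace, betaLaplace, ← intervalIntegral.integral_const_mul]
  have hsub := intervalIntegral.integral_comp_sub_left
    (a := 0) (b := 1) (betaLaplaceIntegrand d c A) 1
  rw [sub_self, sub_zero] at hsub
  rw [← hsub]
  refine intervalIntegral.integral_congr fun s _ ↦ ?_
  simp only [betaLaplaceIntegrand]
  rw [sub_sub_cancel, show -(A * (1 - s)) = -A + -(-A * s) by ring, exp_add]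
  ring

lemma exists_one_add_rpow_le_mul_exp {m b : ℝ} (hm : 0 < m) (hb : 0 < b) :
    ∃ C : ℝ, 0 < C ∧ ∀ x : ℝ, 0 ≤ x → (1 + x) ^ m ≤ C * exp (b * x) := by
  refine ⟨(1 + m / b) ^ m, by positivity, fun x hx ↦ ?_⟩
  have base : 1 + x ≤ (1 + m / b) * exp (b * x / m) :=
    calc 1 + x ≤ 1 + x + (m / b + b * x / m) := le_add_of_nonneg_right (by positivity)
      _ = (1 + m / b) * (b * x / m + 1) := by field_simp; ring
      _ ≤ (1 + m / b) * exp (b * x / m) := by gcongr; exact add_one_le_exp _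
  calc (1 + x) ^ m ≤ ((1 + m / b) * exp (b * x / m)) ^ m := by gcongr
    _ = (1 + m / b) ^ m * exp (b * x) := by
      rw [mul_rpow (by positivity) (by positivity), ← exp_mul, div_mul_cancel₀ _ hm.ne']

lemma integral_rpow_mul_exp_neg_mul_Ioo_le {r : ℝ} (hc : 0 < c) (hr : 0 < r) :
    ∫ s in (0 : ℝ)..1, s ^ (c - 1) * exp (-(r * s)) ≤ Gamma c * r ^ (-c) := by
  have hint : IntegrableOn (fun s ↦ s ^ (c - 1) * exp (-(r * s))) (Ioi 0) := by
    simpa only [rpow_one, neg_mul] using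
      integrableOn_rpow_mul_exp_neg_mul_rpow (s := c - 1) (by linarith) one_pos hr
  calc ∫ s in (0 : ℝ)..1, s ^ (c - 1) * exp (-(r * s))
      ≤ ∫ s in Ioi (0 : ℝ), s ^ (c - 1) * exp (-(r * s)) := by
        rw [intervalIntegral.integral_of_le zero_le_one]
        refine setIntegral_mono_set hint ?_ Ioc_subset_Ioi_self.eventuallyLE
        exact (ae_restrict_iff' measurableSet_Ioi).2 <| ae_of_all _ fun s hs ↦
          mul_nonneg (rpow_nonneg (le_of_lt hs) _) (exp_nonneg _)
    _ = Gamma c * r ^ (-c) := by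
        rw [integral_rpow_mul_exp_neg_mul_Ioi hc hr, one_div, inv_rpow hr.le, rpow_neg hr.le,
          mul_comm]

/- The two terms dominate the integrand on `s ≤ 1/2`, where `(1-s)^{d-1}` is bounded, and on
`1/2 ≤ s`, where `e^{-As}` is smaller than any power of `1 + A`. -/
lemma exists_betaLaplaceIntegrand_le (hc : 0 < c) (hd : 0 < d) :
    ∃ C : ℝ, 0 < C ∧ ∀ A : ℝ, 0 ≤ A → ∀ s ∈ Ioo (0 : ℝ) 1,
      betaLaplaceIntegrand c d A s ≤ 2 * exp 1 * (s ^ (c - 1) * exp (-((1 + A) * s)))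
        + C * (1 + A) ^ (-c) * betaLaplaceIntegrand c d 0 s := by
  obtain ⟨C, hC, hexp⟩ := exists_one_add_rpow_le_mul_exp hc one_half_pos
  refine ⟨C, hC, fun A hA s ⟨hs₀, hs₁⟩ ↦ ?_⟩
  have hs : 0 < 1 - s := sub_pos.2 hs₁
  have h₀ := betaLaplaceIntegrand_nonneg (c := c) (d := d) (A := 0) ⟨hs₀.le, hs₁.le⟩
  rcases le_total s (1 / 2) with hhalf | hhalf
  · have hweight : (1 - s) ^ (d - 1) ≤ 2 := by
      rw [rpow_sub_one hs.ne', div_le_iff₀ hs]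
      linarith [rpow_le_one hs.le (by linarith) hd.le]
    have hdecay : exp (-(A * s)) ≤ exp 1 * exp (-((1 + A) * s)) := by
      rw [← exp_add]
      exact exp_le_exp.2 (by linarith)
    calc betaLaplaceIntegrand c d A s
        ≤ exp 1 * exp (-((1 + A) * s)) * s ^ (c - 1) * 2 := by unfold betaLaplaceIntegrand; gcongr
      _ = 2 * exp 1 * (s ^ (c - 1) * exp (-((1 + A) * s))) := by ring
      _ ≤ _ := le_add_of_nonneg_right (by positivity)
  · have hdecay : exp (-(A * s)) ≤ C * (1 + A) ^ (-c) := by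
      rw [exp_neg, rpow_neg (by linarith), ← div_eq_mul_inv,
        inv_le_comm₀ (exp_pos _) (by positivity), inv_div, div_le_iff₀ hC, mul_comm]
      refine (hexp A hA).trans ?_
      exact mul_le_mul_of_nonneg_left (exp_le_exp.2 (by nlinarith)) hC.le
    calc betaLaplaceIntegrand c d A s = exp (-(A * s)) * betaLaplaceIntegrand c d 0 s := by
          simp [betaLaplaceIntegrand, mul_assoc]
      _ ≤ C * (1 + A) ^ (-c) * betaLaplaceIntegrand c d 0 s := by gcongr
      _ ≤ _ := le_add_of_nonneg_left (by positivity)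

lemma exists_betaLaplace_le (hc : 0 < c) (hd : 0 < d) :
    ∃ C : ℝ, 0 < C ∧ ∀ A : ℝ, 0 ≤ A → betaLaplace c d A ≤ C * (1 + A) ^ (-c) := by
  obtain ⟨C, hC, hle⟩ := exists_betaLaplaceIntegrand_le hc hd
  have hβ : 0 ≤ betaLaplace c d 0 := betaLaplace_nonneg
  refine ⟨2 * exp 1 * Gamma c + C * betaLaplace c d 0, by positivity, fun A hA ↦ ?_⟩
  have hA' : 0 < 1 + A := by linarith
  have hnear : IntervalIntegrable (fun s ↦ 2 * exp 1 * (s ^ (c - 1) * exp (-((1 + A) * s))))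
      volume 0 1 :=
    ((intervalIntegral.intervalIntegrable_rpow' (by linarith)).mul_continuousOn
      (by fun_prop)).const_mul _
  have hfar := (intervalIntegrable_betaLaplaceIntegrand hc hd le_rfl).const_mul
    (C * (1 + A) ^ (-c))
  calc betaLaplace c d A
      ≤ ∫ s in (0 : ℝ)..1, (2 * exp 1 * (s ^ (c - 1) * exp (-((1 + A) * s)))
        + C * (1 + A) ^ (-c) * betaLaplaceIntegrand c d 0 s) :=
        intervalIntegral.integral_mono_on_of_le_Ioo zero_le_one
          (intervalIntegrable_betaLaplaceIntegrand hc hd hA) (hnear.add hfar) (hle A hA)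
    _ = 2 * exp 1 * (∫ s in (0 : ℝ)..1, s ^ (c - 1) * exp (-((1 + A) * s)))
        + C * (1 + A) ^ (-c) * betaLaplace c d 0 := by
        rw [intervalIntegral.integral_add hnear hfar, intervalIntegral.integral_const_mul,
          intervalIntegral.integral_const_mul, betaLaplace]
    _ ≤ 2 * exp 1 * (Gamma c * (1 + A) ^ (-c)) + C * (1 + A) ^ (-c) * betaLaplace c d 0 := by
        gcongr
        exact integral_rpow_mul_exp_neg_mul_Ioo_le hc hA'
    _ = _ := by ring

lemma exists_le_betaLaplace (hc : 0 < c) (hd : 0 < d) :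
    ∃ C : ℝ, 0 < C ∧ ∀ A : ℝ, 0 ≤ A → C * (1 + A) ^ (-c) ≤ betaLaplace c d A := by
  refine ⟨exp (-1) * (1 / 2) ^ d * ((1 / 2) ^ c / c), by positivity, fun A hA ↦ ?_⟩
  set δ := 1 / 2 * (1 + A)⁻¹ with hδ
  have hδ₀ : 0 < δ := by positivity
  have hδhalf : δ ≤ 1 / 2 := by linarith [inv_le_one_of_one_le₀ (by linarith : 1 ≤ 1 + A)]
  have hAδ : A * δ ≤ 1 := by
    rw [hδ, ← mul_assoc, ← div_eq_mul_inv, div_le_one (by linarith)]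
    linarith
  have hpow : IntervalIntegrable (fun s : ℝ ↦ s ^ (c - 1)) volume 0 δ :=
    intervalIntegral.intervalIntegrable_rpow' (by linarith)
  have hint := intervalIntegrable_betaLaplaceIntegrand hc hd hA
  have hpoint (s : ℝ) (hs : s ∈ Ioo 0 δ) :
      exp (-1) * (1 / 2) ^ d * s ^ (c - 1) ≤ betaLaplaceIntegrand c d A s := by
    have ⟨hs₀, hsδ⟩ := hs
    have hs₁ : 1 / 2 ≤ 1 - s := by linarith
    have hexp : exp (-1) ≤ exp (-(A * s)) := exp_le_exp.2 (by nlinarith)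
    have hweight : (1 / 2 : ℝ) ^ d ≤ (1 - s) ^ (d - 1) :=
      calc (1 / 2 : ℝ) ^ d ≤ (1 - s) ^ d := by gcongr
        _ ≤ _ := rpow_le_rpow_of_exponent_ge (by linarith) (by linarith) (by linarith)
    rw [mul_right_comm]
    unfold betaLaplaceIntegrand
    gcongr
  calc exp (-1) * (1 / 2) ^ d * ((1 / 2) ^ c / c) * (1 + A) ^ (-c)
      = exp (-1) * (1 / 2) ^ d * (δ ^ c / c) := by
        rw [hδ, mul_rpow (by norm_num) (by positivity), rpow_neg (by positivity),
          inv_rpow (by positivity)]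
        ring
    _ = ∫ s in (0 : ℝ)..δ, exp (-1) * (1 / 2) ^ d * s ^ (c - 1) := by
        rw [intervalIntegral.integral_const_mul, integral_rpow (Or.inl (by linarith)),
          sub_add_cancel, zero_rpow hc.ne', sub_zero]
    _ ≤ ∫ s in (0 : ℝ)..δ, betaLaplaceIntegrand c d A s := by
        refine intervalIntegral.integral_mono_on_of_le_Ioo hδ₀.le (hpow.const_mul _)
          (hint.mono_set ?_) hpoint
        exact uIcc_subset_uIcc left_mem_uIcc (mem_uIcc_of_le hδ₀.le (by linarith))
    _ ≤ betaLaplace c d A := by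
        refine intervalIntegral.integral_mono_interval le_rfl hδ₀.le (by linarith) ?_ hint
        exact (ae_restrict_iff' measurableSet_Ioc).2 <| ae_of_all _ fun s hs ↦
          betaLaplaceIntegrand_nonneg (Ioc_subset_Icc_self hs)

lemma exists_one_add_rpow_mul_betaLaplaceIntegrand_le {m : ℝ} (hm : 0 < m) (c d : ℝ) :
    ∃ C : ℝ, 0 < C ∧ ∀ A : ℝ, 0 ≤ A → ∀ s ∈ Icc (0 : ℝ) 1,
      (1 + 2 * (A * s)) ^ m * betaLaplaceIntegrand c d A s
        ≤ C * betaLaplaceIntegrand c d (A / 2) s := by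
  obtain ⟨C, hC, hexp⟩ := exists_one_add_rpow_le_mul_exp hm (b := 1 / 4) (by norm_num)
  refine ⟨C, hC, fun A hA s hs ↦ ?_⟩
  have hAs : 0 ≤ A * s := mul_nonneg hA hs.1
  calc (1 + 2 * (A * s)) ^ m * betaLaplaceIntegrand c d A s
      ≤ C * exp (1 / 4 * (2 * (A * s))) * betaLaplaceIntegrand c d A s :=
        mul_le_mul_of_nonneg_right (hexp _ (by positivity)) (betaLaplaceIntegrand_nonneg hs)
    _ = C * betaLaplaceIntegrand c d (A / 2) s := by
        unfold betaLaplaceIntegrand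
        rw [show -(A / 2 * s) = 1 / 4 * (2 * (A * s)) + -(A * s) by ring, exp_add]
        ring

lemma intervalIntegrable_betaLaplaceIntegrand_mul_one_add (hc : 0 < c) (hd : 0 < d) (hA : 0 ≤ A)
    (Q : ℝ) :
    IntervalIntegrable (fun s ↦ betaLaplaceIntegrand c d A s * (1 + Q * s)) volume 0 1 :=
  (intervalIntegrable_betaLaplaceIntegrand hc hd hA).mul_continuousOn (by fun_prop)

lemma integral_betaLaplaceIntegrand_mul_one_add (hc : 0 < c) (hd : 0 < d) (hA : 0 ≤ A) (Q : ℝ) :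
    ∫ s in (0 : ℝ)..1, betaLaplaceIntegrand c d A s * (1 + Q * s)
      = betaLaplace c d A + Q * betaLaplace (c + 1) d A := by
  rw [betaLaplace, betaLaplace, ← intervalIntegral.integral_const_mul,
    ← intervalIntegral.integral_add (intervalIntegrable_betaLaplaceIntegrand hc hd hA)
      ((intervalIntegrable_betaLaplaceIntegrand (by linarith) hd hA).const_mul Q)]
  refine intervalIntegral.integral_congr_Ioo_of_le zero_le_one fun s hs ↦ ?_
  simp only [← mul_betaLaplaceIntegrand hs.1]
  ring

lemma exists_integral_betaLaplaceIntegrand_mul_one_add_le (hc : 0 < c) (hd : 0 < d) :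
    ∃ C : ℝ, 0 < C ∧ ∀ A Q : ℝ, 0 ≤ A → 0 ≤ Q →
      ∫ s in (0 : ℝ)..1, betaLaplaceIntegrand c d A s * (1 + Q * s)
        ≤ C * ((1 + A) ^ (-(c + 1)) * (1 + A + Q)) := by
  obtain ⟨C₀, hC₀, h₀⟩ := exists_betaLaplace_le hc hd
  obtain ⟨C₁, -, h₁⟩ := exists_betaLaplace_le (c := c + 1) (by linarith) hd
  refine ⟨max C₀ C₁, by positivity, fun A Q hA hQ ↦ ?_⟩
  rw [integral_betaLaplaceIntegrand_mul_one_add hc hd hA]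
  calc betaLaplace c d A + Q * betaLaplace (c + 1) d A
      ≤ max C₀ C₁ * (1 + A) ^ (-c) + Q * (max C₀ C₁ * (1 + A) ^ (-(c + 1))) := by
        gcongr
        · exact (h₀ A hA).trans (by gcongr; exact le_max_left _ _)
        · exact (h₁ A hA).trans (by gcongr; exact le_max_right _ _)
    _ = _ := by
        rw [show -c = -(c + 1) + 1 by ring, rpow_add_one (by positivity)]
        ring

lemma exists_le_integral_betaLaplaceIntegrand_mul_one_add (hc : 0 < c) (hd : 0 < d) :
    ∃ C : ℝ, 0 < C ∧ ∀ A Q : ℝ, 0 ≤ A → 0 ≤ Q →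
      C * ((1 + A) ^ (-(c + 1)) * (1 + A + Q))
        ≤ ∫ s in (0 : ℝ)..1, betaLaplaceIntegrand c d A s * (1 + Q * s) := by
  obtain ⟨C₀, hC₀, h₀⟩ := exists_le_betaLaplace hc hd
  obtain ⟨C₁, hC₁, h₁⟩ := exists_le_betaLaplace (c := c + 1) (by linarith) hd
  refine ⟨min C₀ C₁, by positivity, fun A Q hA hQ ↦ ?_⟩
  rw [integral_betaLaplaceIntegrand_mul_one_add hc hd hA]
  calc min C₀ C₁ * ((1 + A) ^ (-(c + 1)) * (1 + A + Q))
      = min C₀ C₁ * (1 + A) ^ (-c) + Q * (min C₀ C₁ * (1 + A) ^ (-(c + 1))) := by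
        rw [show -c = -(c + 1) + 1 by ring, rpow_add_one (by positivity)]
        ring
    _ ≤ _ := by
        gcongr
        · exact le_trans (by gcongr; exact min_le_left _ _) (h₀ A hA)
        · exact le_trans (by gcongr; exact min_le_right _ _) (h₁ A hA)

end BetaLaplace

section IteratedIntegrals

lemma integral_integral_bounds_of_mul_le_of_le_mul {α β : Type*} [MeasurableSpace α]
    [MeasurableSpace β] {μ : Measure α} {ν : Measure β} [SFinite μ] [SFinite ν]
    {F : α → β → ℝ} (hF : AEStronglyMeasurable (Function.uncurry F) (μ.prod ν))
    {f₀ f₁ : α → ℝ} {g₀ g₁ : β → ℝ} (hf₀ : Integrable f₀ μ) (hg₀ : Integrable g₀ ν)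
    (hf₁ : Integrable f₁ μ) (hg₁ : Integrable g₁ ν)
    (hlower : ∀ᵐ z ∂μ.prod ν, f₀ z.1 * g₀ z.2 ≤ F z.1 z.2)
    (hupper : ∀ᵐ z ∂μ.prod ν, F z.1 z.2 ≤ f₁ z.1 * g₁ z.2) :
    (∫ x, f₀ x ∂μ) * ∫ y, g₀ y ∂ν ≤ ∫ x, ∫ y, F x y ∂ν ∂μ ∧
      ∫ x, ∫ y, F x y ∂ν ∂μ ≤ (∫ x, f₁ x ∂μ) * ∫ y, g₁ y ∂ν := by
  have hint : Integrable (Function.uncurry F) (μ.prod ν) :=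
    integrable_of_le_of_le hF hlower hupper (hf₀.mul_prod hg₀) (hf₁.mul_prod hg₁)
  rw [integral_integral hint, ← integral_prod_mul, ← integral_prod_mul]
  exact ⟨integral_mono_ae (hf₀.mul_prod hg₀) hint hlower,
    integral_mono_ae hint (hf₁.mul_prod hg₁) hupper⟩

lemma integral_integral_unit_square_bounds {F : ℝ → ℝ → ℝ} (hF : Measurable (Function.uncurry F))
    {f₀ f₁ g₀ g₁ : ℝ → ℝ} (hf₀ : IntervalIntegrable f₀ volume 0 1)
    (hg₀ : IntervalIntegrable g₀ volume 0 1) (hf₁ : IntervalIntegrable f₁ volume 0 1)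
    (hg₁ : IntervalIntegrable g₁ volume 0 1)
    (hlower : ∀ t ∈ Ioo (0 : ℝ) 1, ∀ s ∈ Ioo (0 : ℝ) 1, f₀ t * g₀ s ≤ F t s)
    (hupper : ∀ t ∈ Ioo (0 : ℝ) 1, ∀ s ∈ Ioo (0 : ℝ) 1, F t s ≤ f₁ t * g₁ s) :
    (∫ t in (0 : ℝ)..1, f₀ t) * ∫ s in (0 : ℝ)..1, g₀ s
        ≤ ∫ t in (0 : ℝ)..1, ∫ s in (0 : ℝ)..1, F t s ∧
      ∫ t in (0 : ℝ)..1, ∫ s in (0 : ℝ)..1, F t s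
        ≤ (∫ t in (0 : ℝ)..1, f₁ t) * ∫ s in (0 : ℝ)..1, g₁ s := by
  rw [intervalIntegrable_iff_integrableOn_Ioo_of_le zero_le_one] at hf₀ hg₀ hf₁ hg₁
  simp only [intervalIntegral.integral_of_le zero_le_one, integral_Ioc_eq_integral_Ioo]
  have hmem : ∀ᵐ z ∂(volume.restrict (Ioo (0 : ℝ) 1)).prod (volume.restrict (Ioo (0 : ℝ) 1)),
      z ∈ Ioo (0 : ℝ) 1 ×ˢ Ioo (0 : ℝ) 1 := by
    rw [Measure.prod_restrict]
    exact ae_restrict_mem (measurableSet_Ioo.prod measurableSet_Ioo)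
  exact integral_integral_bounds_of_mul_le_of_le_mul hF.aestronglyMeasurable hf₀ hg₀ hf₁ hg₁
    (hmem.mono fun z hz ↦ hlower z.1 hz.1 z.2 hz.2) (hmem.mono fun z hz ↦ hupper z.1 hz.1 z.2 hz.2)

lemma integral_integral_eq_unit_square (F : ℝ → ℝ → ℝ) (a b c d : ℝ) :
    ∫ y in c..d, ∫ x in a..b, F y x = ∫ t in (0 : ℝ)..1, ∫ s in (0 : ℝ)..1,
      (d - c) * ((b - a) * F (c + (d - c) * t) (b - (b - a) * s)) := by
  have inner (y : ℝ) := intervalIntegral.mul_integral_comp_sub_mul (f := F y) (a := 0) (b := 1)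
    (b - a) b
  have outer := intervalIntegral.mul_integral_comp_add_mul (f := fun y ↦ ∫ x in a..b, F y x)
    (a := 0) (b := 1) (d - c) c
  simp only [mul_zero, mul_one, sub_zero, add_zero, sub_sub_cancel, add_sub_cancel] at inner outer
  simp only [intervalIntegral.integral_const_mul, inner, outer]

end IteratedIntegrals

section ReducedKernel

/-- The factor of the `A₂` integrand in the coordinates `ν₁ = λ₁ - α_λ s`, `ν₂ = λ₃ + β_λ t` that
is neither exponential nor a Beta weight. Here `σ = β_λ / γ_λ` and `N = γ_λ γ_{X⁺}`; the two
`betaLaplace` terms are the rank-one kernels with their exponential growth removed. -/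
noncomputable def rankOneFactor (k σ N t s : ℝ) : ℝ :=
  (1 - σ * t) ^ (k - 1) * (1 - (1 - σ) * s) ^ k *
    ((1 - s) * (1 - σ * t) * betaLaplace (k + 1) k (N * (1 - (1 - σ) * s - σ * t))
      + σ * s * (1 - t) * betaLaplace k (k + 1) (N * (1 - (1 - σ) * s - σ * t)))

/-- The `A₂` Dunkl kernel with its exponential growth removed, as a function of `σ = β_λ / γ_λ`,
`A = α_λ α_{X⁺}`, `B = β_λ β_{X⁺}` and `N = γ_λ γ_{X⁺}`. -/
noncomputable def reducedKernel (k σ A B N : ℝ) : ℝ :=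
  ∫ t in (0 : ℝ)..1, ∫ s in (0 : ℝ)..1,
    betaLaplaceIntegrand (k + 1) k B t * betaLaplaceIntegrand k k A s * rankOneFactor k σ N t s

variable {k σ A B N s t : ℝ}

lemma measurable_reducedKernel_integrand (k σ A B N : ℝ) :
    Measurable (Function.uncurry fun t s ↦ betaLaplaceIntegrand (k + 1) k B t *
      betaLaplaceIntegrand k k A s * rankOneFactor k σ N t s) := by
  have hJ (c d : ℝ) : Measurable fun p : ℝ × ℝ ↦
      betaLaplace c d (N * (1 - (1 - σ) * p.2 - σ * p.1)) :=
    measurable_betaLaplace.comp (by fun_prop)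
  unfold Function.uncurry rankOneFactor betaLaplaceIntegrand
  fun_prop

lemma rpow_mul_rpow_neg_le {p ρ G w D : ℝ} (hp : 0 ≤ p) (hρ : 0 ≤ ρ) (hG : 0 < G) (hw : 0 ≤ w)
    (hD : 0 < D) (h : ρ * G ≤ w * D) : ρ ^ p * D ^ (-p) ≤ w ^ p * G ^ (-p) := by
  rw [rpow_neg hD.le, rpow_neg hG.le, ← div_eq_mul_inv, ← div_eq_mul_inv, ← div_rpow hρ hD.le,
    ← div_rpow hw hG.le]
  exact rpow_le_rpow (by positivity) ((div_le_div_iff₀ hD hG).2 h) hp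

lemma one_add_half_rpow_neg_le {p x : ℝ} (hp : 0 ≤ p) (hx : 0 ≤ x) :
    (1 + x / 2) ^ (-p) ≤ 2 ^ p * (1 + x) ^ (-p) := by
  have := rpow_mul_rpow_neg_le (ρ := 1) (G := 1 + x) (w := 2) (D := 1 + x / 2) hp one_pos.le
    (by linarith) two_pos.le (by linarith) (by linarith)
  rwa [one_rpow, one_mul] at this

lemma one_sub_sub_nonneg (hσ : 0 ≤ σ) (hσ' : σ ≤ 1) (hs : s ∈ Icc (0 : ℝ) 1)
    (ht : t ∈ Icc (0 : ℝ) 1) : 0 ≤ 1 - (1 - σ) * s - σ * t := by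
  nlinarith [mul_le_mul_of_nonneg_left hs.2 (sub_nonneg.2 hσ'), mul_le_mul_of_nonneg_left ht.2 hσ]

/- Moving `s` and `t` away from the corner `(0,0)` shrinks the argument `N (1 - (1-σ)s - σt)` of
the rank-one kernels; the factor `1 - (1-σ)s` makes up for `s`, the factor `1 + σNt` for `t`. -/
lemma exists_one_sub_mul_rpow_mul_betaLaplace_le {c d : ℝ} (hc : 0 < c) (hd : 0 < d) :
    ∃ C : ℝ, 0 < C ∧ ∀ σ N : ℝ, 0 ≤ σ → σ ≤ 1 → 0 ≤ N →
      ∀ t ∈ Icc (0 : ℝ) 1, ∀ s ∈ Icc (0 : ℝ) 1,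
        (1 - (1 - σ) * s) ^ c * betaLaplace c d (N * (1 - (1 - σ) * s - σ * t))
          ≤ C * ((1 + σ * N * t) ^ c * (1 + N) ^ (-c)) := by
  obtain ⟨C, hC, h⟩ := exists_betaLaplace_le hc hd
  refine ⟨C, hC, fun σ N hσ hσ' hN t ht s hs ↦ ?_⟩
  have hω := mul_nonneg hN (one_sub_sub_nonneg hσ hσ' hs ht)
  have hσs : 0 ≤ (1 - σ) * s := mul_nonneg (by linarith) hs.1
  have hw : 0 ≤ σ * N * t := mul_nonneg (mul_nonneg hσ hN) ht.1
  have hρ : 0 ≤ 1 - (1 - σ) * s := by nlinarith [hs.2]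
  calc (1 - (1 - σ) * s) ^ c * betaLaplace c d (N * (1 - (1 - σ) * s - σ * t))
      ≤ (1 - (1 - σ) * s) ^ c * (C * (1 + N * (1 - (1 - σ) * s - σ * t)) ^ (-c)) := by
        gcongr
        exact h _ hω
    _ = C * ((1 - (1 - σ) * s) ^ c * (1 + N * (1 - (1 - σ) * s - σ * t)) ^ (-c)) := by ring
    _ ≤ C * ((1 + σ * N * t) ^ c * (1 + N) ^ (-c)) := by
        refine mul_le_mul_of_nonneg_left (rpow_mul_rpow_neg_le hc.le hρ (by linarith) (by linarith)
          (by linarith) ?_) hC.le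
        nlinarith [mul_nonneg hw hω]

lemma rankOneFactor_le (hk : 0 < k) (hσ : 0 ≤ σ) (hσ' : σ ≤ 1 / 2) (ht : t ∈ Icc (0 : ℝ) 1)
    (hs : s ∈ Icc (0 : ℝ) 1) :
    rankOneFactor k σ N t s
      ≤ (1 - (1 - σ) * s) ^ (k + 1) * betaLaplace (k + 1) k (N * (1 - (1 - σ) * s - σ * t))
        + 2 * (σ * s) * ((1 - (1 - σ) * s) ^ k
          * betaLaplace k (k + 1) (N * (1 - (1 - σ) * s - σ * t))) := by
  have ⟨ht₀, ht₁⟩ := ht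
  have ⟨hs₀, hs₁⟩ := hs
  have hσt : 0 ≤ σ * t := mul_nonneg hσ ht₀
  have hρ : 0 ≤ 1 - (1 - σ) * s := by nlinarith
  have hrρ : 1 - s ≤ 1 - (1 - σ) * s := by nlinarith
  have hθ : 1 / 2 ≤ 1 - σ * t := by nlinarith
  unfold rankOneFactor
  set θ := 1 - σ * t
  set ρ := 1 - (1 - σ) * s
  set J₀ := betaLaplace (k + 1) k (N * (ρ - σ * t))
  set J₁ := betaLaplace k (k + 1) (N * (ρ - σ * t))
  have hJ₀ : 0 ≤ J₀ := betaLaplace_nonneg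
  have hJ₁ : 0 ≤ J₁ := betaLaplace_nonneg
  have hθk : θ ^ (k - 1) * θ ≤ 1 := by
    rw [← rpow_add_one (by linarith), sub_add_cancel]
    exact rpow_le_one (by linarith) (by linarith) hk.le
  have hθk' : θ ^ (k - 1) ≤ 2 := by nlinarith [rpow_nonneg (by linarith : 0 ≤ θ) (k - 1)]
  calc θ ^ (k - 1) * ρ ^ k * ((1 - s) * θ * J₀ + σ * s * (1 - t) * J₁)
      = θ ^ (k - 1) * θ * (ρ ^ k * (1 - s) * J₀)
        + θ ^ (k - 1) * (σ * s * (1 - t)) * (ρ ^ k * J₁) := by ring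
    _ ≤ 1 * (ρ ^ k * ρ * J₀) + 2 * (σ * s * 1) * (ρ ^ k * J₁) := by
        gcongr; nlinarith
    _ = ρ ^ (k + 1) * J₀ + 2 * (σ * s) * (ρ ^ k * J₁) := by
        rw [rpow_add_one' hρ (by linarith)]
        ring

lemma exists_rankOneFactor_le (hk : 0 < k) :
    ∃ C : ℝ, 0 < C ∧ ∀ σ N : ℝ, 0 ≤ σ → σ ≤ 1 / 2 → 0 ≤ N →
      ∀ t ∈ Icc (0 : ℝ) 1, ∀ s ∈ Icc (0 : ℝ) 1, rankOneFactor k σ N t s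
        ≤ C * (1 + σ * N * t) ^ (k + 1) * ((1 + N) ^ (-(k + 1)) * (1 + σ * (1 + N) * s)) := by
  obtain ⟨C₀, hC₀, h₀⟩ :=
    exists_one_sub_mul_rpow_mul_betaLaplace_le (c := k + 1) (by linarith) hk
  obtain ⟨C₁, hC₁, h₁⟩ :=
    exists_one_sub_mul_rpow_mul_betaLaplace_le hk (d := k + 1) (by linarith)
  refine ⟨max C₀ (2 * C₁), by positivity, fun σ N hσ hσ' hN t ht s hs ↦ ?_⟩
  have hs₀ := hs.1
  have hw : 1 ≤ 1 + σ * N * t :=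
    le_add_of_nonneg_right (mul_nonneg (mul_nonneg hσ hN) ht.1)
  set w := 1 + σ * N * t
  have hG : (1 + N) ^ (-k) = (1 + N) ^ (-(k + 1)) * (1 + N) := by
    rw [← rpow_add_one (by positivity), neg_add, neg_add_cancel_right]
  calc rankOneFactor k σ N t s
      ≤ C₀ * (w ^ (k + 1) * (1 + N) ^ (-(k + 1)))
        + 2 * (σ * s) * (C₁ * (w ^ k * (1 + N) ^ (-k))) :=
        (rankOneFactor_le hk hσ hσ' ht hs).trans <| add_le_add
          (h₀ σ N hσ (by linarith) hN t ht s hs)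
          (mul_le_mul_of_nonneg_left (h₁ σ N hσ (by linarith) hN t ht s hs) (by positivity))
    _ = w ^ (k + 1) * (C₀ * (1 + N) ^ (-(k + 1)))
        + w ^ k * (2 * C₁ * ((1 + N) ^ (-(k + 1)) * (σ * (1 + N) * s))) := by
        rw [hG]
        ring
    _ ≤ w ^ (k + 1) * (max C₀ (2 * C₁) * (1 + N) ^ (-(k + 1)))
        + w ^ (k + 1) * (max C₀ (2 * C₁) * ((1 + N) ^ (-(k + 1)) * (σ * (1 + N) * s))) := by
        gcongr
        · exact le_max_left _ _
        · linarith
        · exact le_max_right _ _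
    _ = _ := by ring

lemma le_rankOneFactor (hk : 0 < k) (hσ : 0 ≤ σ) (hσ' : σ ≤ 1 / 2) (ht : t ∈ Icc (0 : ℝ) 1)
    (hs : s ∈ Icc (0 : ℝ) 1) :
    (1 / 2) ^ k * ((1 - s) ^ (k + 1) * (1 - t))
        * (betaLaplace (k + 1) k (N * (1 - (1 - σ) * s - σ * t))
          + σ * s * betaLaplace k (k + 1) (N * (1 - (1 - σ) * s - σ * t)))
      ≤ rankOneFactor k σ N t s := by
  have ⟨ht₀, ht₁⟩ := ht
  have ⟨hs₀, hs₁⟩ := hs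
  have hr : 0 ≤ 1 - s := by linarith
  have hσt : 0 ≤ σ * t := mul_nonneg hσ ht₀
  have hρ : 1 - s ≤ 1 - (1 - σ) * s := by nlinarith
  have hθ : 1 / 2 ≤ 1 - σ * t := by nlinarith
  unfold rankOneFactor
  set θ := 1 - σ * t
  set ρ := 1 - (1 - σ) * s
  set J₀ := betaLaplace (k + 1) k (N * (ρ - σ * t))
  set J₁ := betaLaplace k (k + 1) (N * (ρ - σ * t))
  have hJ₀ : 0 ≤ J₀ := betaLaplace_nonneg
  have hJ₁ : 0 ≤ J₁ := betaLaplace_nonneg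
  have hθk : (1 / 2 : ℝ) ^ k ≤ θ ^ (k - 1) * θ := by
    rw [← rpow_add_one (by linarith), sub_add_cancel]
    gcongr
  have hθk' : (1 / 2 : ℝ) ^ k ≤ θ ^ (k - 1) :=
    hθk.trans (mul_le_of_le_one_right (rpow_nonneg (by linarith) _) (by linarith))
  calc (1 / 2) ^ k * ((1 - s) ^ (k + 1) * (1 - t)) * (J₀ + σ * s * J₁)
      = (1 / 2) ^ k * ((1 - s) ^ k * (1 - s) * (1 - t) * J₀)
        + (1 / 2) ^ k * ((1 - s) ^ k * (1 - s) * (σ * s * (1 - t) * J₁)) := by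
        rw [rpow_add_one' hr (by linarith)]
        ring
    _ ≤ θ ^ (k - 1) * θ * (ρ ^ k * (1 - s) * 1 * J₀)
        + θ ^ (k - 1) * (ρ ^ k * 1 * (σ * s * (1 - t) * J₁)) := by
        have hρk : 0 ≤ ρ ^ k := rpow_nonneg (hr.trans hρ) k
        gcongr <;> linarith
    _ = θ ^ (k - 1) * ρ ^ k * ((1 - s) * θ * J₀ + σ * s * (1 - t) * J₁) := by ring

lemma exists_le_rankOneFactor (hk : 0 < k) :
    ∃ C : ℝ, 0 < C ∧ ∀ σ N : ℝ, 0 ≤ σ → σ ≤ 1 / 2 → 0 ≤ N →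
      ∀ t ∈ Icc (0 : ℝ) 1, ∀ s ∈ Icc (0 : ℝ) 1,
        C * ((1 - s) ^ (k + 1) * (1 - t)) * ((1 + N) ^ (-(k + 1)) * (1 + σ * (1 + N) * s))
          ≤ rankOneFactor k σ N t s := by
  obtain ⟨C₀, hC₀, h₀⟩ := exists_le_betaLaplace (c := k + 1) (by linarith) hk
  obtain ⟨C₁, hC₁, h₁⟩ := exists_le_betaLaplace hk (d := k + 1) (by linarith)
  refine ⟨(1 / 2) ^ k * min C₀ C₁, by positivity, fun σ N hσ hσ' hN t ht s hs ↦ ?_⟩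
  have hs₀ := hs.1
  have hr : 0 ≤ 1 - s := by linarith [hs.2]
  have hτ : 0 ≤ 1 - t := by linarith [ht.2]
  have hω := mul_nonneg hN (one_sub_sub_nonneg hσ (by linarith) hs ht)
  have hωN : N * (1 - (1 - σ) * s - σ * t) ≤ N :=
    mul_le_of_le_one_right hN (by nlinarith [mul_nonneg hσ ht.1])
  have hJ₀ : min C₀ C₁ * (1 + N) ^ (-(k + 1))
      ≤ betaLaplace (k + 1) k (N * (1 - (1 - σ) * s - σ * t)) :=
    (mul_le_mul (min_le_left _ _) (rpow_le_rpow_of_nonpos (by linarith) (by linarith)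
      (by linarith)) (by positivity) hC₀.le).trans (h₀ _ hω)
  have hJ₁ : min C₀ C₁ * ((1 + N) ^ (-(k + 1)) * (1 + N))
      ≤ betaLaplace k (k + 1) (N * (1 - (1 - σ) * s - σ * t)) := by
    rw [← rpow_add_one (by positivity), neg_add, neg_add_cancel_right]
    exact (mul_le_mul (min_le_right _ _) (rpow_le_rpow_of_nonpos (by linarith) (by linarith)
      (by linarith)) (by positivity) hC₁.le).trans (h₁ _ hω)
  calc (1 / 2) ^ k * min C₀ C₁ * ((1 - s) ^ (k + 1) * (1 - t))
        * ((1 + N) ^ (-(k + 1)) * (1 + σ * (1 + N) * s))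
      = (1 / 2) ^ k * ((1 - s) ^ (k + 1) * (1 - t)) * (min C₀ C₁ * (1 + N) ^ (-(k + 1))
        + σ * s * (min C₀ C₁ * ((1 + N) ^ (-(k + 1)) * (1 + N)))) := by ring
    _ ≤ _ := by gcongr
    _ ≤ rankOneFactor k σ N t s := le_rankOneFactor hk hσ hσ' ht hs

lemma exists_reducedKernel_integrand_le (hk : 0 < k) :
    ∃ C : ℝ, 0 < C ∧ ∀ σ A B N : ℝ, 0 ≤ σ → σ ≤ 1 / 2 → 0 ≤ B → 0 ≤ N →
      σ * N ≤ 2 * B → ∀ t ∈ Ioo (0 : ℝ) 1, ∀ s ∈ Ioo (0 : ℝ) 1,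
        betaLaplaceIntegrand (k + 1) k B t * betaLaplaceIntegrand k k A s * rankOneFactor k σ N t s
          ≤ C * (1 + N) ^ (-(k + 1)) * betaLaplaceIntegrand (k + 1) k (B / 2) t
            * (betaLaplaceIntegrand k k A s * (1 + σ * (1 + N) * s)) := by
  obtain ⟨C₀, hC₀, hfactor⟩ := exists_rankOneFactor_le hk
  obtain ⟨C₁, hC₁, habsorb⟩ := exists_one_add_rpow_mul_betaLaplaceIntegrand_le
    (m := k + 1) (by linarith) (k + 1) k
  refine ⟨C₀ * C₁, by positivity, fun σ A B N hσ hσ' hB hN hσN t ht s hs ↦ ?_⟩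
  have ht' := Ioo_subset_Icc_self ht
  have hs' := Ioo_subset_Icc_self hs
  have ht₀ := ht.1
  have hs₀ := hs.1
  have hf := betaLaplaceIntegrand_nonneg (c := k + 1) (d := k) (A := B) ht'
  have hg := betaLaplaceIntegrand_nonneg (c := k) (d := k) (A := A) hs'
  have hw : 1 + σ * N * t ≤ 1 + 2 * (B * t) := by nlinarith
  calc betaLaplaceIntegrand (k + 1) k B t * betaLaplaceIntegrand k k A s * rankOneFactor k σ N t s
      ≤ betaLaplaceIntegrand (k + 1) k B t * betaLaplaceIntegrand k k A s
        * (C₀ * (1 + 2 * (B * t)) ^ (k + 1)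
          * ((1 + N) ^ (-(k + 1)) * (1 + σ * (1 + N) * s))) := by
        gcongr
        refine (hfactor σ N hσ hσ' hN t ht' s hs').trans ?_
        gcongr
    _ = C₀ * (1 + N) ^ (-(k + 1))
        * ((1 + 2 * (B * t)) ^ (k + 1) * betaLaplaceIntegrand (k + 1) k B t)
        * (betaLaplaceIntegrand k k A s * (1 + σ * (1 + N) * s)) := by ring
    _ ≤ C₀ * (1 + N) ^ (-(k + 1)) * (C₁ * betaLaplaceIntegrand (k + 1) k (B / 2) t)
        * (betaLaplaceIntegrand k k A s * (1 + σ * (1 + N) * s)) := by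
        gcongr ?_ * _
        exact mul_le_mul_of_nonneg_left (habsorb B hB t ht') (by positivity)
    _ = _ := by ring

lemma exists_le_reducedKernel_integrand (hk : 0 < k) :
    ∃ C : ℝ, 0 < C ∧ ∀ σ A B N : ℝ, 0 ≤ σ → σ ≤ 1 / 2 → 0 ≤ N →
      ∀ t ∈ Ioo (0 : ℝ) 1, ∀ s ∈ Ioo (0 : ℝ) 1,
        C * (1 + N) ^ (-(k + 1)) * betaLaplaceIntegrand (k + 1) (k + 1) B t
            * (betaLaplaceIntegrand k (k + (k + 1)) A s * (1 + σ * (1 + N) * s))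
          ≤ betaLaplaceIntegrand (k + 1) k B t * betaLaplaceIntegrand k k A s
            * rankOneFactor k σ N t s := by
  obtain ⟨C, hC, hfactor⟩ := exists_le_rankOneFactor hk
  refine ⟨C, hC, fun σ A B N hσ hσ' hN t ht s hs ↦ ?_⟩
  have ht' := Ioo_subset_Icc_self ht
  have hs' := Ioo_subset_Icc_self hs
  have hf := betaLaplaceIntegrand_nonneg (c := k + 1) (d := k) (A := B) ht'
  have hg := betaLaplaceIntegrand_nonneg (c := k) (d := k) (A := A) hs'
  rw [← rpow_mul_betaLaplaceIntegrand 1 ht.2, ← rpow_mul_betaLaplaceIntegrand (k + 1) hs.2,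
    rpow_one]
  calc _ = betaLaplaceIntegrand (k + 1) k B t * betaLaplaceIntegrand k k A s
        * (C * ((1 - s) ^ (k + 1) * (1 - t))
          * ((1 + N) ^ (-(k + 1)) * (1 + σ * (1 + N) * s))) := by ring
    _ ≤ _ := mul_le_mul_of_nonneg_left (hfactor σ N hσ hσ' hN t ht' s hs') (mul_nonneg hf hg)

lemma exists_le_reducedKernel_le (hk : 0 < k) :
    ∃ c C : ℝ, 0 < c ∧ 0 < C ∧ ∀ σ A B N : ℝ, 0 ≤ σ → σ ≤ 1 / 2 → 0 ≤ A → 0 ≤ B → 0 ≤ N →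
      σ * N ≤ 2 * B →
        c * (1 + N) ^ (-(k + 1)) * (1 + B) ^ (-(k + 1))
            * ((1 + A) ^ (-(k + 1)) * (1 + A + σ * (1 + N))) ≤ reducedKernel k σ A B N ∧
          reducedKernel k σ A B N ≤ C * (1 + N) ^ (-(k + 1)) * (1 + B) ^ (-(k + 1))
            * ((1 + A) ^ (-(k + 1)) * (1 + A + σ * (1 + N))) := by
  have hk₁ : 0 < k + 1 := by linarith
  have hk₂ : 0 < k + (k + 1) := by linarith
  obtain ⟨c₀, hc₀, hlower⟩ := exists_le_reducedKernel_integrand hk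
  obtain ⟨C₀, hC₀, hupper⟩ := exists_reducedKernel_integrand_le hk
  obtain ⟨c₁, hc₁, hlower_t⟩ := exists_le_betaLaplace hk₁ hk₁
  obtain ⟨C₁, hC₁, hupper_t⟩ := exists_betaLaplace_le hk₁ hk
  obtain ⟨c₂, hc₂, hlower_s⟩ := exists_le_integral_betaLaplaceIntegrand_mul_one_add hk hk₂
  obtain ⟨C₂, hC₂, hupper_s⟩ := exists_integral_betaLaplaceIntegrand_mul_one_add_le hk hk
  refine ⟨c₀ * c₁ * c₂, C₀ * (C₁ * 2 ^ (k + 1)) * C₂, by positivity, by positivity,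
    fun σ A B N hσ hσ' hA hB hN hσN ↦ ?_⟩
  have hQ : 0 ≤ σ * (1 + N) := by positivity
  have bounds := integral_integral_unit_square_bounds (measurable_reducedKernel_integrand k σ A B N)
    ((intervalIntegrable_betaLaplaceIntegrand hk₁ hk₁ hB).const_mul _)
    (intervalIntegrable_betaLaplaceIntegrand_mul_one_add hk hk₂ hA _)
    ((intervalIntegrable_betaLaplaceIntegrand hk₁ hk (by positivity : 0 ≤ B / 2)).const_mul _)
    (intervalIntegrable_betaLaplaceIntegrand_mul_one_add hk hk hA _)
    (hlower σ A B N hσ hσ' hN) (hupper σ A B N hσ hσ' hB hN hσN)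
  simp only [intervalIntegral.integral_const_mul] at bounds
  constructor
  · refine le_trans ?_ bounds.1
    calc _ = c₀ * (1 + N) ^ (-(k + 1)) * (c₁ * (1 + B) ^ (-(k + 1)))
          * (c₂ * ((1 + A) ^ (-(k + 1)) * (1 + A + σ * (1 + N)))) := by ring
      _ ≤ _ := mul_le_mul (mul_le_mul_of_nonneg_left (hlower_t B hB) (by positivity))
          (hlower_s A _ hA hQ) (by positivity) (mul_nonneg (by positivity) betaLaplace_nonneg)
  · refine bounds.2.trans ?_
    have ht : betaLaplace (k + 1) k (B / 2) ≤ C₁ * (2 ^ (k + 1) * (1 + B) ^ (-(k + 1))) :=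
      (hupper_t _ (by positivity)).trans <|
        mul_le_mul_of_nonneg_left (one_add_half_rpow_neg_le hk₁.le hB) hC₁.le
    calc _ ≤ C₀ * (1 + N) ^ (-(k + 1)) * (C₁ * (2 ^ (k + 1) * (1 + B) ^ (-(k + 1))))
          * (C₂ * ((1 + A) ^ (-(k + 1)) * (1 + A + σ * (1 + N)))) :=
          mul_le_mul (mul_le_mul_of_nonneg_left ht (by positivity)) (hupper_s A _ hA hQ)
            (intervalIntegral.integral_nonneg zero_le_one fun s hs ↦ mul_nonneg
              (betaLaplaceIntegrand_nonneg hs) (by have := hs.1; positivity)) (by positivity)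
      _ = _ := by ring

lemma exists_le_reducedKernel_le_of_le (hk : 0 < k) :
    ∃ c C : ℝ, 0 < c ∧ 0 < C ∧ ∀ σ A B N : ℝ, 0 ≤ σ → σ ≤ 1 / 2 → 0 ≤ A → A ≤ B → 0 ≤ N →
      B ≤ σ * N → σ * N ≤ 2 * B →
        c * ((1 + A) ^ (-(k + 1)) * (1 + B) ^ (-k) * (1 + N) ^ (-(k + 1)))
            ≤ reducedKernel k σ A B N ∧
          reducedKernel k σ A B N
            ≤ C * ((1 + A) ^ (-(k + 1)) * (1 + B) ^ (-k) * (1 + N) ^ (-(k + 1))) := by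
  obtain ⟨c, C, hc, hC, bounds⟩ := exists_le_reducedKernel_le hk
  refine ⟨c, C * 3, hc, by positivity, fun σ A B N hσ hσ' hA hAB hN hB hσN ↦ ?_⟩
  have ⟨lower, upper⟩ := bounds σ A B N hσ hσ' hA (hA.trans hAB) hN hσN
  have hB₀ := hA.trans hAB
  have hQ : 1 + B ≤ 1 + A + σ * (1 + N) := by linarith
  rw [show -k = -(k + 1) + 1 by ring, rpow_add_one (by positivity)]
  constructor
  · refine le_trans ?_ lower
    calc _ = c * (1 + N) ^ (-(k + 1)) * (1 + B) ^ (-(k + 1))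
          * ((1 + A) ^ (-(k + 1)) * (1 + B)) := by ring
      _ ≤ _ := by gcongr
  · refine upper.trans ?_
    calc _ ≤ C * (1 + N) ^ (-(k + 1)) * (1 + B) ^ (-(k + 1))
          * ((1 + A) ^ (-(k + 1)) * (3 * (1 + B))) := by gcongr; linarith
      _ = _ := by ring

end ReducedKernel

section KernelReduction

/-- The constant `K` for which `E_k^{rk1}(u,v) = K e^{uv} ∫₀¹ e^{-2uvs} s^{k-1} (1-s)^k ds`. -/
noncomputable def rankOneConst (k : ℝ) : ℝ :=
  Gamma (k + 1 / 2) / (√π * Gamma k) * 4 ^ k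

lemma rankOneConst_pos {k : ℝ} (hk : 0 < k) : 0 < rankOneConst k := by
  have := Gamma_pos_of_pos hk
  have := Gamma_pos_of_pos (by linarith : 0 < k + 1 / 2)
  unfold rankOneConst
  positivity

lemma Erk1_eq_exp_mul_betaLaplace (k u v : ℝ) :
    Erk1 k u v = rankOneConst k * (exp (u * v) * betaLaplace k (k + 1) (2 * (u * v))) := by
  have hsub := intervalIntegral.mul_integral_comp_sub_mul
    (f := fun z : ℝ ↦ exp (z * u * v) * (1 - z) ^ (k - 1) * (1 + z) ^ k) (a := 0) (b := 1) 2 1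
  rw [show (1 : ℝ) - 2 * 1 = -1 by norm_num, mul_zero, sub_zero] at hsub
  have h4 : (4 : ℝ) ^ k = 2 * 2 ^ (k - 1) * 2 ^ k := by
    rw [show (4 : ℝ) = 2 * 2 by norm_num, mul_rpow two_pos.le two_pos.le, mul_comm 2,
      ← rpow_add_one two_ne_zero, sub_add_cancel]
  rw [Erk1, ← hsub, rankOneConst, betaLaplace]
  simp only [← intervalIntegral.integral_const_mul]
  refine intervalIntegral.integral_congr_Ioo_of_le zero_le_one fun s ⟨hs₀, hs₁⟩ ↦ ?_
  simp only [betaLaplaceIntegrand]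
  rw [show 1 - (1 - 2 * s) = 2 * s by ring, show 1 + (1 - 2 * s) = 2 * (1 - s) by ring,
    mul_rpow two_pos.le hs₀.le, mul_rpow two_pos.le (sub_nonneg.2 hs₁.le),
    show (1 - 2 * s) * u * v = u * v + -(2 * (u * v) * s) by ring, exp_add, add_sub_cancel_right,
    h4]
  ring

lemma Erk1_neg_eq_exp_mul_betaLaplace (k u v : ℝ) :
    Erk1 k (-u) v = rankOneConst k * (exp (u * v) * betaLaplace (k + 1) k (2 * (u * v))) := by
  rw [Erk1_eq_exp_mul_betaLaplace, betaLaplace_swap (c := k) (d := k + 1),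
    ← mul_assoc (exp (u * v)), ← exp_add]
  ring_nf

lemma sq_mul_sq_mul_rpow_sub_one_div {k V Q : ℝ} (hV : 0 < V) (hQ : 0 ≤ Q) :
    V ^ 2 * (V ^ 2 * Q) ^ (k - 1) / V ^ (2 * k) = Q ^ (k - 1) := by
  rw [mul_rpow (sq_nonneg V) hQ, ← mul_assoc, mul_comm (V ^ 2), ← rpow_add_one (by positivity),
    sub_add_cancel, rpow_mul hV.le, rpow_two, mul_div_cancel_left₀ _ (by positivity)]

lemma Vlam_pos {l1 l2 l3 : ℝ} (h₁₂ : l2 < l1) (h₂₃ : l3 < l2) : 0 < Vlam l1 l2 l3 := by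
  have := sub_pos.2 h₁₂
  have := sub_pos.2 h₂₃
  have := sub_pos.2 (h₂₃.trans h₁₂)
  unfold Vlam
  positivity

lemma Wk_eq_rpow (k l g σ t s : ℝ) :
    Wk k (l + g) (l + σ * g) l (l + g - (1 - σ) * g * s) (l + σ * g * t)
      = (Vlam (l + g) (l + σ * g) l ^ 2
        * (t * (1 - t) * (s * (1 - s)) * ((1 - σ * t) * (1 - (1 - σ) * s)))) ^ (k - 1) := by
  unfold Wk Vlam
  congr 1
  ring

lemma Vlam_sq_mul_Wk_div (k l : ℝ) {g σ t s : ℝ} (hg : 0 < g) (hσ : 0 < σ) (hσ' : σ < 1)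
    (ht : t ∈ Ioo (0 : ℝ) 1) (hs : s ∈ Ioo (0 : ℝ) 1) :
    Vlam (l + g) (l + σ * g) l ^ 2
        * Wk k (l + g) (l + σ * g) l (l + g - (1 - σ) * g * s) (l + σ * g * t)
        / Vlam (l + g) (l + σ * g) l ^ (2 * k)
      = t ^ (k - 1) * (1 - t) ^ (k - 1) * (s ^ (k - 1) * (1 - s) ^ (k - 1))
        * ((1 - σ * t) ^ (k - 1) * (1 - (1 - σ) * s) ^ (k - 1)) := by
  have ⟨ht₀, ht₁⟩ := ht
  have ⟨hs₀, hs₁⟩ := hs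
  have hV : 0 < Vlam (l + g) (l + σ * g) l := Vlam_pos (by nlinarith) (by nlinarith)
  have hτ : 0 < 1 - t := sub_pos.2 ht₁
  have hr : 0 < 1 - s := sub_pos.2 hs₁
  have hθ : 0 < 1 - σ * t := by nlinarith
  have hρ : 0 < 1 - (1 - σ) * s := by nlinarith
  rw [Wk_eq_rpow, sq_mul_sq_mul_rpow_sub_one_div hV (by positivity),
    mul_rpow (by positivity) (by positivity), mul_rpow (by positivity) (by positivity),
    mul_rpow ht₀.le hτ.le, mul_rpow hs₀.le hr.le, mul_rpow hθ.le hρ.le]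

lemma exp_mul_exp_eq_exp_mul_exp_mul_exp (x1 x2 x3 l g σ t s : ℝ) :
    exp ((x1 + x2 - 2 * x3) * (l + g - (1 - σ) * g * s + (l + σ * g * t)) / 2)
        * exp ((x2 - x1) / 2 * (l + g - (1 - σ) * g * s - (l + σ * g * t)))
      = exp ((l + g) * (x2 - x3) + l * (x1 - x3)) * exp (-((1 - σ) * g * (x2 - x3) * s))
        * exp (-(σ * g * (x3 - x1) * t)) := by
  rw [← exp_add, ← exp_add, ← exp_add]
  ring_nf

/- With `ν₁ = λ₁ - α_λ s` and `ν₂ = λ₃ + β_λ t`, the exponent becomes `⟨λ, X⁺⟩` minus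
`α_λ α_{X⁺} s + β_λ β_{X⁺} t`, and `1 - (1-σ)s - σt = (ν₁ - ν₂) / γ_λ`. -/
lemma EkA2_integrand_eq (k x1 x2 x3 l : ℝ) {g σ t s : ℝ} (hg : 0 < g) (hσ : 0 < σ) (hσ' : σ < 1)
    (ht : t ∈ Ioo (0 : ℝ) 1) (hs : s ∈ Ioo (0 : ℝ) 1) :
    let ν₁ := l + g - (1 - σ) * g * s
    let ν₂ := l + σ * g * t
    let V := Vlam (l + g) (l + σ * g) l
    σ * g * ((1 - σ) * g * (((ν₁ - (l + σ * g)) * (l + g - ν₂) * Erk1 k ((x1 - x2) / 2) (ν₁ - ν₂)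
        + (l + g - ν₁) * (l + σ * g - ν₂) * Erk1 k (-(x1 - x2) / 2) (ν₁ - ν₂))
      * ((ν₁ - l) * (ν₂ - l)) * exp ((x1 + x2 - 2 * x3) * (ν₁ + ν₂) / 2)
      * Wk k (l + g) (l + σ * g) l ν₁ ν₂)) / V ^ (2 * k)
    = rankOneConst k * exp ((l + g) * (x2 - x3) + l * (x1 - x3))
      * (betaLaplaceIntegrand (k + 1) k (σ * g * (x3 - x1)) t
        * betaLaplaceIntegrand k k ((1 - σ) * g * (x2 - x3)) s
        * rankOneFactor k σ (g * (x2 - x1)) t s) := by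
  intro ν₁ ν₂ V
  have hρ : 0 < 1 - (1 - σ) * s := by nlinarith [hs.1, hs.2]
  have hω : 2 * ((x2 - x1) / 2 * (ν₁ - ν₂)) = g * (x2 - x1) * (1 - (1 - σ) * s - σ * t) := by ring
  rw [show (x1 - x2) / 2 = -((x2 - x1) / 2) by ring, show -(x1 - x2) / 2 = (x2 - x1) / 2 by ring,
    Erk1_neg_eq_exp_mul_betaLaplace, Erk1_eq_exp_mul_betaLaplace, hω, rankOneFactor]
  set J₀ := betaLaplace (k + 1) k (g * (x2 - x1) * (1 - (1 - σ) * s - σ * t))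
  set J₁ := betaLaplace k (k + 1) (g * (x2 - x1) * (1 - (1 - σ) * s - σ * t))
  calc _ = rankOneConst k * (exp ((x1 + x2 - 2 * x3) * (ν₁ + ν₂) / 2)
          * exp ((x2 - x1) / 2 * (ν₁ - ν₂)))
        * (V ^ 2 * Wk k (l + g) (l + σ * g) l ν₁ ν₂ / V ^ (2 * k)) * (t * (1 - (1 - σ) * s)
        * ((1 - s) * (1 - σ * t) * J₀ + σ * s * (1 - t) * J₁)) := by
        simp only [V, Vlam, ν₁, ν₂]
        ring
    _ = _ := by
        rw [exp_mul_exp_eq_exp_mul_exp_mul_exp, Vlam_sq_mul_Wk_div k l hg hσ hσ' ht hs,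
          betaLaplaceIntegrand, betaLaplaceIntegrand, add_sub_cancel_right,
          rpow_sub_one ht.1.ne', rpow_sub_one hρ.ne']
        field_simp [ht.1.ne', hρ.ne']

lemma EkA2_add_eq_mul_reducedKernel (k x1 x2 x3 l : ℝ) {g σ : ℝ} (hg : 0 < g) (hσ : 0 < σ)
    (hσ' : σ < 1) :
    EkA2 k x1 x2 x3 (l + g) (l + σ * g) l
      = 3 * Gamma (3 * k) / Gamma k ^ 2 * (rankOneConst k
        * exp ((l + g) * (x2 - x3) + l * (x1 - x3))
        * reducedKernel k σ ((1 - σ) * g * (x2 - x3)) (σ * g * (x3 - x1)) (g * (x2 - x1))) := by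
  rw [EkA2, integral_integral_eq_unit_square, mul_comm (_ ^ (2 * k)), ← div_div,
    div_mul_eq_mul_div, mul_div_assoc, reducedKernel, ← intervalIntegral.integral_div]
  congr 1
  simp only [← intervalIntegral.integral_const_mul, ← intervalIntegral.integral_div]
  refine intervalIntegral.integral_congr_Ioo_of_le zero_le_one fun t ht ↦ ?_
  refine intervalIntegral.integral_congr_Ioo_of_le zero_le_one fun s hs ↦ ?_
  simp only [← EkA2_integrand_eq k x1 x2 x3 l hg hσ hσ' ht hs, add_sub_cancel_left,
    show l + g - (l + σ * g) = (1 - σ) * g by ring]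

lemma EkA2_eq_mul_reducedKernel (k x1 x2 x3 : ℝ) {l1 l2 l3 : ℝ} (h₁₂ : l2 < l1) (h₂₃ : l3 < l2) :
    EkA2 k x1 x2 x3 l1 l2 l3
      = 3 * Gamma (3 * k) / Gamma k ^ 2 * rankOneConst k * exp (l1 * (x2 - x3) + l3 * (x1 - x3))
        * reducedKernel k ((l2 - l3) / (l1 - l3)) ((l1 - l2) * (x2 - x3)) ((l2 - l3) * (x3 - x1))
          ((l1 - l3) * (x2 - x1)) := by
  have hg : 0 < l1 - l3 := sub_pos.2 (h₂₃.trans h₁₂)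
  have hσg : (l2 - l3) / (l1 - l3) * (l1 - l3) = l2 - l3 := div_mul_cancel₀ _ hg.ne'
  have key := EkA2_add_eq_mul_reducedKernel k x1 x2 x3 l3 hg (div_pos (sub_pos.2 h₂₃) hg)
    ((div_lt_one hg).2 (by linarith))
  rw [one_sub_mul, hσg, add_sub_cancel, add_sub_cancel, sub_sub_sub_cancel_right] at key
  rw [key]
  ring

end KernelReduction

lemma exists_le_reducedKernel_le_of_mem_chamber {k : ℝ} (hk : 0 < k) :
    ∃ c C : ℝ, 0 < c ∧ 0 < C ∧ ∀ l1 l2 l3 x1 x2 x3 : ℝ, l2 < l1 → l3 < l2 → x3 ≤ x2 →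
      l2 - l3 ≤ l1 - l2 → (l1 - l2) * (x2 - x3) ≤ (l2 - l3) * (x3 - x1) →
      let D := (1 + (l1 - l2) * (x2 - x3)) ^ (k + 1) * (1 + (l2 - l3) * (x3 - x1)) ^ k
        * (1 + (l1 - l3) * (x2 - x1)) ^ (k + 1)
      let R := reducedKernel k ((l2 - l3) / (l1 - l3)) ((l1 - l2) * (x2 - x3))
        ((l2 - l3) * (x3 - x1)) ((l1 - l3) * (x2 - x1))
      0 < D ∧ c * D⁻¹ ≤ R ∧ R ≤ C * D⁻¹ := by
  obtain ⟨c, C, hc, hC, bounds⟩ := exists_le_reducedKernel_le_of_le hk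
  refine ⟨c, C, hc, hC, fun l1 l2 l3 x1 x2 x3 h₁₂ h₂₃ hx hβα hAB ↦ ?_⟩
  have hβ : 0 < l2 - l3 := sub_pos.2 h₂₃
  have hγ : 0 < l1 - l3 := by linarith
  have hA : 0 ≤ (l1 - l2) * (x2 - x3) := mul_nonneg (by linarith) (by linarith)
  have hB := hA.trans hAB
  have hx₁₃ : 0 ≤ x3 - x1 := nonneg_of_mul_nonneg_right hB hβ
  have hN : 0 ≤ (l1 - l3) * (x2 - x1) := mul_nonneg hγ.le (by linarith)
  have hσ : (l2 - l3) / (l1 - l3) ≤ 1 / 2 := by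
    rw [div_le_div_iff₀ hγ two_pos]
    linarith
  have hσN : (l2 - l3) / (l1 - l3) * ((l1 - l3) * (x2 - x1)) = (l2 - l3) * (x2 - x1) := by
    rw [← mul_assoc, div_mul_cancel₀ _ hγ.ne']
  have key := bounds ((l2 - l3) / (l1 - l3)) _ _ _ (by positivity) hσ hA hAB hN
    (by rw [hσN]; gcongr) (by rw [hσN]; nlinarith)
  rw [rpow_neg (by positivity), rpow_neg (by positivity), rpow_neg (by positivity), ← mul_inv,
    ← mul_inv] at key
  exact ⟨by positivity, key⟩

theorem estimate_C231_case3_general {k : ℝ} (hk : 0 < k) :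
    ∃ C : ℝ, 0 < C ∧ ∀ l1 l2 l3 x1 x2 x3 : ℝ, l2 < l1 → l3 < l2 → x3 ≤ x2 →
      l2 - l3 ≤ l1 - l2 → (l1 - l2) * (x2 - x3) ≤ (l2 - l3) * (x3 - x1) →
      C⁻¹ * (exp (l1 * (x2 - x3) + l3 * (x1 - x3)) /
          ((1 + (l1 - l2) * (x2 - x3)) ^ (k + 1) * (1 + (l2 - l3) * (x3 - x1)) ^ k
            * (1 + (l1 - l3) * (x2 - x1)) ^ (k + 1)))
        ≤ EkA2 k x1 x2 x3 l1 l2 l3 ∧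
      EkA2 k x1 x2 x3 l1 l2 l3
        ≤ C * (exp (l1 * (x2 - x3) + l3 * (x1 - x3)) /
          ((1 + (l1 - l2) * (x2 - x3)) ^ (k + 1) * (1 + (l2 - l3) * (x3 - x1)) ^ k
            * (1 + (l1 - l3) * (x2 - x1)) ^ (k + 1))) := by
  obtain ⟨c, C, hc, -, bounds⟩ := exists_le_reducedKernel_le_of_mem_chamber hk
  set κ := 3 * Gamma (3 * k) / Gamma k ^ 2 * rankOneConst k with hκ_def
  have hκ : 0 < κ := by
    have := Gamma_pos_of_pos hk
    have := Gamma_pos_of_pos (by positivity : 0 < 3 * k)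
    have := rankOneConst_pos hk
    positivity
  refine ⟨max (κ * c)⁻¹ (κ * C), by positivity, fun l1 l2 l3 x1 x2 x3 h₁₂ h₂₃ hx hβα hAB ↦ ?_⟩
  have ⟨hD, lower, upper⟩ := bounds l1 l2 l3 x1 x2 x3 h₁₂ h₂₃ hx hβα hAB
  rw [EkA2_eq_mul_reducedKernel k x1 x2 x3 h₁₂ h₂₃, ← hκ_def]
  set D := (1 + (l1 - l2) * (x2 - x3)) ^ (k + 1) * (1 + (l2 - l3) * (x3 - x1)) ^ k
    * (1 + (l1 - l3) * (x2 - x1)) ^ (k + 1)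
  set e := exp (l1 * (x2 - x3) + l3 * (x1 - x3))
  constructor
  · calc (max (κ * c)⁻¹ (κ * C))⁻¹ * (e / D)
        ≤ κ * c * (e / D) := by
          gcongr
          exact inv_le_of_inv_le₀ (by positivity) (le_max_left _ _)
      _ = κ * e * (c * D⁻¹) := by ring
      _ ≤ _ := by gcongr
  · calc _ ≤ κ * e * (C * D⁻¹) := by gcongr
      _ = κ * C * (e / D) := by ring
      _ ≤ _ := by gcongr; exact le_max_right _ _

/-- Theorem 4.1: sharp estimate of the `A₂` Dunkl kernel. -/
theorem estimate_C231_case3 (k : ℝ) (hk : 0 < k) :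
    ∃ C : ℝ, 0 < C ∧ ∀ l1 l2 l3 x1 x2 x3 : ℝ,
      l1 + l2 + l3 = 0 →
      l2 < l1 →
      l3 < l2 →
      x1 + x2 + x3 = 0 →
      x3 ≤ x2 →
      x1 ≤ x3 →
      l2 - l3 ≤ l1 - l2 →
      (l1 - l2) * (x2 - x3) ≤ (l2 - l3) * (x3 - x1) →
      (C⁻¹ * (Real.exp (l1 * x2 + l2 * x3 + l3 * x1) /
          ((1 + (l1 - l2) * (x2 - x3)) ^ (k + 1) * (1 + (l2 - l3) * (x3 - x1)) ^ k
            * (1 + (l1 - l3) * (x2 - x1)) ^ (k + 1)))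
        ≤ EkA2 k x1 x2 x3 l1 l2 l3 ∧
      EkA2 k x1 x2 x3 l1 l2 l3
        ≤ C * (Real.exp (l1 * x2 + l2 * x3 + l3 * x1) /
          ((1 + (l1 - l2) * (x2 - x3)) ^ (k + 1) * (1 + (l2 - l3) * (x3 - x1)) ^ k
            * (1 + (l1 - l3) * (x2 - x1)) ^ (k + 1)))) := by
  obtain ⟨C, hC, bounds⟩ := estimate_C231_case3_general hk
  refine ⟨C, hC, fun l1 l2 l3 x1 x2 x3 hl h₁₂ h₂₃ _ hx _ hβα hAB ↦ ?_⟩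
  rw [show l1 * x2 + l2 * x3 + l3 * x1 = l1 * (x2 - x3) + l3 * (x1 - x3) by
    linear_combination x3 * hl]
  exact bounds l1 l2 l3 x1 x2 x3 h₁₂ h₂₃ hx hβα hAB
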